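/- Let μ⋆, μₙ ∈ ℝ and λ⋆, κₙ, αₙ, βₙ > 0. Then ∫ KL(N(μ⋆, 1/λ⋆) ‖ N(μ, 1/λ)) dNG(μₙ, κₙ, αₙ, βₙ)(μ, λ) = (1/2)·( log(λ⋆ βₙ) − ψ(αₙ) + (αₙ/βₙ)·(1/λ⋆ + (μ⋆ − μₙ)²) − 1 + 1/κₙ ), where ψ is the digamma function. -/

import Mathlib

open MeasureTheory ProbabilityTheory Real
open scoped ENNReal NNReal Classical

/-- Kullback-Leibler divergence: `∫ log (dQ/dP) dQ` when `Q ≪ P` and the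
log-likelihood ratio is integrable, `+∞` otherwise. -/
noncomputable def klDiv {Ω : Type*} [MeasurableSpace Ω] (Q P : Measure Ω) : ℝ≥0∞ :=
  if Q ≪ P ∧ Integrable (fun x => Real.log (Q.rnDeriv P x).toReal) Q
  then ENNReal.ofReal (∫ x, Real.log (Q.rnDeriv P x).toReal ∂Q)
  else ⊤

/-- The digamma function: derivative of `log ∘ Γ`. -/
noncomputable def digamma (x : ℝ) : ℝ := deriv (fun y => Real.log (Real.Gamma y)) x

/-- Joint density of the normal-gamma distribution `NG(m, κ, α, β)` at `p = (μ, λ)`: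
`N(μ | m, (κλ)⁻¹) · Gamma(λ | α, β)`. -/
noncomputable def normalGammaPDFReal (m κ α β : ℝ) (p : ℝ × ℝ) : ℝ :=
  gaussianPDFReal m (Real.toNNReal (κ * p.2)⁻¹) p.1 * gammaPDFReal α β p.2

/-- The normal-gamma distribution `NG(m, κ, α, β)` as a measure on `ℝ × ℝ`
(supported on `ℝ × (0, ∞)`). -/
noncomputable def normalGamma (m κ α β : ℝ) : Measure (ℝ × ℝ) :=
  MeasureTheory.volume.withDensity (fun p => ENNReal.ofReal (normalGammaPDFReal m κ α β p))

lemma gauss_sq (m a : ℝ) (v : ℝ≥0) :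
    Integrable (fun x : ℝ => (x - a) ^ 2) (gaussianReal m v) ∧
      ∫ x, (x - a) ^ 2 ∂(gaussianReal m v) = v + (m - a) ^ 2 := by
  have h1 : Integrable (fun x : ℝ => x) (gaussianReal m v) :=
    (memLp_id_gaussianReal (μ := m) (v := v) 1).integrable (by simp)
  have h2 : Integrable (fun x : ℝ => (x - m) ^ 2) (gaussianReal m v) := by
    have := (memLp_id_gaussianReal (μ := m) (v := v) 2).sub (memLp_const m)
    exact this.integrable_sq
  have hv : ∫ x, (x - m) ^ 2 ∂(gaussianReal m v) = v := by
    have := variance_fun_id_gaussianReal (μ := m) (v := v)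
    rw [variance_eq_integral measurable_id'.aemeasurable] at this
    simpa [integral_id_gaussianReal] using this
  have he : (fun x : ℝ => (x - a) ^ 2)
      = fun x => (x - m) ^ 2 + (2 * (m - a) * x + ((m - a) ^ 2 - 2 * (m - a) * m)) := by
    funext x; ring
  have h3 : Integrable (fun x : ℝ => 2 * (m - a) * x + ((m - a) ^ 2 - 2 * (m - a) * m))
      (gaussianReal m v) := (h1.const_mul _).add (integrable_const _)
  rw [he]
  refine ⟨h2.add h3, ?_⟩
  rw [integral_add h2 h3, integral_add (h1.const_mul _) (integrable_const _), hv,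
    integral_const_mul, integral_id_gaussianReal]
  simp

/-- closed form of the divergence between two Gaussians -/
noncomputable def klForm (ms ls m l : ℝ) : ℝ :=
  (1 / 2) * (Real.log (ls / l) - 1) + l / 2 * (1 / ls + (ms - m) ^ 2)

lemma klForm_nonneg (ms ls m l : ℝ) (hls : 0 < ls) (hl : 0 < l) : 0 ≤ klForm ms ls m l := by
  unfold klForm
  have h := Real.log_le_sub_one_of_pos (div_pos hl hls)
  have h2 : Real.log (ls / l) = - Real.log (l / ls) := by
    rw [← Real.log_inv, inv_div]
  have h3 : 0 ≤ l / 2 * (ms - m) ^ 2 := by positivity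
  have h4 : l / 2 * (1 / ls) = (1 / 2) * (l / ls) := by ring
  rw [h2, mul_add, h4]
  linarith

lemma log_gaussianPDFReal (m l x : ℝ) (hl : 0 < l) :
    Real.log (gaussianPDFReal m (Real.toNNReal (1 / l)) x)
      = (1 / 2) * Real.log l - (1 / 2) * Real.log (2 * π) - l / 2 * (x - m) ^ 2 := by
  have hp : 0 < 2 * π := by positivity
  have hl' : 0 < 1 / l := by positivity
  rw [gaussianPDFReal, Real.coe_toNNReal _ hl'.le, Real.log_mul (by positivity) (by positivity),
    Real.log_exp, Real.log_inv, Real.log_sqrt (by positivity),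
    Real.log_mul hp.ne' hl'.ne', one_div, Real.log_inv]
  field_simp
  ring

lemma klDiv_gauss (ms ls m l : ℝ) (hls : 0 < ls) (hl : 0 < l) :
    klDiv (gaussianReal ms (Real.toNNReal (1 / ls))) (gaussianReal m (Real.toNNReal (1 / l)))
      = ENNReal.ofReal (klForm ms ls m l) := by
  have hls' : 0 < 1 / ls := by positivity
  have hv1 : Real.toNNReal (1 / ls) ≠ 0 := by simpa using hls
  have hv2 : Real.toNNReal (1 / l) ≠ 0 := by simpa using hl
  have hac1 := gaussianReal_absolutelyContinuous ms hv1
  have hac : gaussianReal ms (Real.toNNReal (1 / ls)) ≪ gaussianReal m (Real.toNNReal (1 / l)) :=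
    hac1.trans (gaussianReal_absolutelyContinuous' m hv2)
  have hae : (fun x => Real.log ((gaussianReal ms (Real.toNNReal (1 / ls))).rnDeriv
      (gaussianReal m (Real.toNNReal (1 / l))) x).toReal)
      =ᵐ[gaussianReal ms (Real.toNNReal (1 / ls))]
      fun x => (1 / 2) * Real.log (ls / l) + (-(ls / 2) * (x - ms) ^ 2 + l / 2 * (x - m) ^ 2) := by
    apply hac1.ae_le
    have hr := Measure.rnDeriv_withDensity_right (gaussianReal ms (Real.toNNReal (1 / ls))) volume
      (measurable_gaussianPDF m (Real.toNNReal (1 / l))).aemeasurable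
      (ae_of_all _ fun x => (gaussianPDF_pos m hv2 x).ne')
      (ae_of_all _ fun x => gaussianPDF_lt_top.ne)
    rw [← gaussianReal_of_var_ne_zero m hv2] at hr
    filter_upwards [hr, rnDeriv_gaussianReal ms (Real.toNNReal (1 / ls))] with x hx1 hx2
    rw [hx1, hx2, ENNReal.toReal_mul, ENNReal.toReal_inv, toReal_gaussianPDF, toReal_gaussianPDF,
      Real.log_mul (inv_ne_zero (gaussianPDFReal_pos _ _ _ hv2).ne')
        (gaussianPDFReal_pos _ _ _ hv1).ne', Real.log_inv, log_gaussianPDFReal _ _ _ hl,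
      log_gaussianPDFReal _ _ _ hls, Real.log_div hls.ne' hl.ne']
    ring
  obtain ⟨i1, e1⟩ := gauss_sq ms ms (Real.toNNReal (1 / ls))
  obtain ⟨i2, e2⟩ := gauss_sq ms m (Real.toNNReal (1 / ls))
  have i3 : Integrable (fun x : ℝ => -(ls / 2) * (x - ms) ^ 2 + l / 2 * (x - m) ^ 2)
      (gaussianReal ms (Real.toNNReal (1 / ls))) :=
    (i1.const_mul (-(ls / 2))).add (i2.const_mul (l / 2))
  have i4 := (integrable_const (μ := gaussianReal ms (Real.toNNReal (1 / ls)))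
    ((1 / 2) * Real.log (ls / l))).add i3
  rw [klDiv, if_pos ⟨hac, (integrable_congr hae).2 i4⟩, integral_congr_ae hae]
  congr 1
  rw [integral_add (integrable_const _) i3,
    integral_add (i1.const_mul (-(ls / 2))) (i2.const_mul (l / 2)),
    integral_const_mul, integral_const_mul, integral_const_mul, e1, e2, Real.coe_toNNReal _ hls'.le]
  simp only [integral_const, probReal_univ, smul_eq_mul, klForm]
  field_simp
  ring

lemma klForm_average (ms ls m l κ : ℝ) (hls : 0 < ls) (hl : 0 < l) (hκ : 0 < κ) :
    ∫⁻ x, ENNReal.ofReal (klForm ms ls x l) ∂(gaussianReal m (Real.toNNReal (κ * l)⁻¹))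
      = ENNReal.ofReal (klForm ms ls m l + 1 / (2 * κ)) := by
  obtain ⟨i1, e1⟩ := gauss_sq m ms (Real.toNNReal (κ * l)⁻¹)
  have he : (fun x => klForm ms ls x l) = fun x =>
      ((1 / 2) * (Real.log (ls / l) - 1) + l / 2 * (1 / ls)) + l / 2 * (x - ms) ^ 2 := by
    funext x; unfold klForm; ring
  have hi : Integrable (fun x => klForm ms ls x l) (gaussianReal m (Real.toNNReal (κ * l)⁻¹)) := by
    rw [he]; exact (integrable_const _).add (i1.const_mul _)
  rw [← ofReal_integral_eq_lintegral_ofReal hi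
    (ae_of_all _ fun x => klForm_nonneg _ _ _ _ hls hl), he,
    integral_add (integrable_const _) (i1.const_mul _), integral_const_mul, e1,
    Real.coe_toNNReal _ (by positivity)]
  congr 1
  simp only [integral_const, probReal_univ, smul_eq_mul, klForm]
  field_simp
  ring

lemma gamma_integrable (α β : ℝ) (hα : 0 < α) (hβ : 0 < β) :
    IntegrableOn (fun x : ℝ => x ^ (α - 1) * Real.exp (-(β * x))) (Set.Ioi 0) := by
  have := integrableOn_rpow_mul_exp_neg_mul_rpow (p := 1) (s := α - 1) (b := β)
    (by linarith) one_pos hβ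
  simpa using this

lemma gamma_log (α β : ℝ) (hα : 0 < α) (hβ : 0 < β) :
    IntegrableOn (fun x : ℝ => x ^ (α - 1) * Real.exp (-(β * x)) * Real.log x) (Set.Ioi 0) ∧
    ∫ x in Set.Ioi 0, x ^ (α - 1) * Real.exp (-(β * x)) * Real.log x
      = (1 / β) ^ α * Real.Gamma α * (digamma α - Real.log β) := by
  have hcont : Continuous fun t : ℝ => ((Real.exp (-(β * t)) : ℝ) : ℂ) := by fun_prop
  have key := mellin_hasDerivAt_of_isBigO_rpow (E := ℂ) (a := α + 1) (b := 0)
    (f := fun t : ℝ => ((Real.exp (-(β * t)) : ℝ) : ℂ)) (s := (α : ℂ))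
    (hcont.continuousOn.locallyIntegrableOn measurableSet_Ioi)
    (by
      rw [← Asymptotics.isBigO_norm_left]
      simp_rw [Complex.norm_real, Asymptotics.isBigO_norm_left]
      simpa only [neg_mul] using (isLittleO_exp_neg_mul_rpow_atTop hβ (-(α + 1))).isBigO)
    (by simp)
    (by
      simp_rw [neg_zero, Real.rpow_zero]
      refine Asymptotics.isBigO_const_of_tendsto (y := (1 : ℂ)) ?_ one_ne_zero
      have := hcont.tendsto 0
      simp only [mul_zero, neg_zero, Real.exp_zero, Complex.ofReal_one] at this
      exact this.mono_left nhdsWithin_le_nhds)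
    (by simpa using hα)
  obtain ⟨hc, hd⟩ := key
  have hfun : Set.EqOn (fun t : ℝ => (t : ℂ) ^ ((α : ℂ) - 1) •
      (Real.log t • ((Real.exp (-(β * t)) : ℝ) : ℂ)))
      (fun t : ℝ => ((t ^ (α - 1) * Real.exp (-(β * t)) * Real.log t : ℝ) : ℂ)) (Set.Ioi 0) := by
    intro t ht
    have ht : 0 < t := ht
    simp only [smul_eq_mul, Complex.real_smul]
    push_cast [Complex.ofReal_cpow ht.le]
    ring
  have hint : IntegrableOn
      (fun x : ℝ => x ^ (α - 1) * Real.exp (-(β * x)) * Real.log x) (Set.Ioi 0) := by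
    have h1 := (integrableOn_congr_fun hfun measurableSet_Ioi).1 hc
    have h2 := h1.re
    exact h2
  refine ⟨hint, ?_⟩
  have hval : mellin (fun t : ℝ => Real.log t • ((Real.exp (-(β * t)) : ℝ) : ℂ)) (α : ℂ)
      = ((∫ x in Set.Ioi 0, x ^ (α - 1) * Real.exp (-(β * x)) * Real.log x : ℝ) : ℂ) := by
    rw [mellin, setIntegral_congr_fun measurableSet_Ioi hfun, integral_complex_ofReal]
  have hd2 := hd.real_of_complex
  rw [hval, Complex.ofReal_re] at hd2
  have hev : (fun s : ℝ => (mellin (fun t : ℝ => ((Real.exp (-(β * t)) : ℝ) : ℂ)) (s : ℂ)).re)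
      =ᶠ[nhds α] fun s => (1 / β) ^ s * Real.Gamma s := by
    filter_upwards [Ioi_mem_nhds hα] with s hs
    rw [← Real.integral_rpow_mul_exp_neg_mul_Ioi hs hβ, mellin]
    have : Set.EqOn (fun t : ℝ => (t : ℂ) ^ ((s : ℂ) - 1) • ((Real.exp (-(β * t)) : ℝ) : ℂ))
      (fun t : ℝ => ((t ^ (s - 1) * Real.exp (-(β * t)) : ℝ) : ℂ)) (Set.Ioi 0) := by
      intro t ht
      have ht : 0 < t := ht
      simp only [smul_eq_mul]
      push_cast [Complex.ofReal_cpow ht.le]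
      ring
    rw [setIntegral_congr_fun measurableSet_Ioi this, integral_complex_ofReal]
    exact Complex.ofReal_re _
  have hd3 := hd2.congr_of_eventuallyEq hev.symm
  have hG : DifferentiableAt ℝ Real.Gamma α :=
    Real.differentiableAt_Gamma fun n => by
      have : (0 : ℝ) ≤ n := Nat.cast_nonneg n
      intro h; linarith
  have hGne := (Real.Gamma_pos_of_pos hα).ne'
  have hpow : HasDerivAt (fun s : ℝ => (1 / β) ^ s) ((1 / β) ^ α * Real.log (1 / β)) α := by
    have := (hasDerivAt_id α).const_rpow (a := 1 / β) (by positivity)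
    simpa [mul_comm] using this
  have hd4 := hpow.mul hG.hasDerivAt
  have h5 := hd3.unique hd4
  have h6 : digamma α = deriv Real.Gamma α / Real.Gamma α := by
    unfold digamma
    exact (hG.hasDerivAt.log hGne).deriv
  rw [h5, h6, one_div, Real.log_inv]
  field_simp
  ring

lemma measurable_klForm (ms ls : ℝ) : Measurable fun p : ℝ × ℝ => klForm ms ls p.1 p.2 := by
  unfold klForm; fun_prop

lemma measurable_ngPDF (m κ α β : ℝ) : Measurable (normalGammaPDFReal m κ α β) := by
  unfold normalGammaPDFReal gaussianPDFReal
  have := measurable_gammaPDFReal α β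
  fun_prop

lemma ngPDF_of_nonpos (m κ α β : ℝ) (p : ℝ × ℝ) (h : p.2 ≤ 0) :
    normalGammaPDFReal m κ α β p = 0 := by
  rcases h.lt_or_eq with h | h
  · simp [normalGammaPDFReal, gammaPDFReal, not_le.2 h]
  · simp [normalGammaPDFReal, h]

set_option maxHeartbeats 1000000 in
theorem normalGamma_posterior_averaged_klDiv_wellspecified
    (μstar μₙ lamstar κₙ αₙ βₙ : ℝ) (hlam : 0 < lamstar)
    (hκ : 0 < κₙ) (hα : 0 < αₙ) (hβ : 0 < βₙ) :
    ((∫⁻ pr, klDiv (gaussianReal μstar (Real.toNNReal (1 / lamstar)))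
          (gaussianReal pr.1 (Real.toNNReal (1 / pr.2)))
        ∂(normalGamma μₙ κₙ αₙ βₙ) : ℝ≥0∞) : EReal)
      = (((1 / 2) * (Real.log (lamstar * βₙ) - digamma αₙ
          + (αₙ / βₙ) * (1 / lamstar + (μstar - μₙ) ^ 2) - 1 + 1 / κₙ) : ℝ) : EReal) := by
  have hmd : Measurable fun p => ENNReal.ofReal (normalGammaPDFReal μₙ κₙ αₙ βₙ p) :=
    (measurable_ngPDF _ _ _ _).ennreal_ofReal
  have hmk : Measurable fun p : ℝ × ℝ => ENNReal.ofReal (klForm μstar lamstar p.1 p.2) :=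
    (measurable_klForm _ _).ennreal_ofReal
  have hae : (fun pr : ℝ × ℝ => klDiv (gaussianReal μstar (Real.toNNReal (1 / lamstar)))
      (gaussianReal pr.1 (Real.toNNReal (1 / pr.2)))) =ᵐ[normalGamma μₙ κₙ αₙ βₙ]
      fun p => ENNReal.ofReal (klForm μstar lamstar p.1 p.2) := by
    rw [Filter.EventuallyEq, normalGamma, ae_withDensity_iff hmd]
    refine ae_of_all _ fun p hp => ?_
    have h2 : 0 < p.2 := by
      by_contra h
      exact hp (by rw [ngPDF_of_nonpos _ _ _ _ _ (not_lt.1 h), ENNReal.ofReal_zero])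
    exact klDiv_gauss _ _ _ _ hlam h2
  have hc : 0 < Real.Gamma αₙ := Real.Gamma_pos_of_pos hα
  obtain ⟨c, hcdef⟩ : ∃ c : ℝ, c = βₙ ^ αₙ / Real.Gamma αₙ := ⟨_, rfl⟩
  let g : ℝ → ℝ := fun l => c * (l ^ (αₙ - 1) * Real.exp (-(βₙ * l)))
    * (klForm μstar lamstar μₙ l + 1 / (2 * κₙ))
  have hinner : ∀ l : ℝ, ∫⁻ x, ENNReal.ofReal (normalGammaPDFReal μₙ κₙ αₙ βₙ (x, l)) *
      ENNReal.ofReal (klForm μstar lamstar x l)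
      = (Set.Ioi (0 : ℝ)).indicator (fun l => ENNReal.ofReal (g l)) l := by
    intro l
    by_cases hl : 0 < l
    · rw [Set.indicator_of_mem (show l ∈ Set.Ioi (0 : ℝ) from hl)]
      have hv : Real.toNNReal (κₙ * l)⁻¹ ≠ 0 := by
        have : 0 < (κₙ * l)⁻¹ := by positivity
        simpa using this
      have h1 := klForm_average μstar lamstar μₙ l κₙ hlam hl hκ
      have hmkl : Measurable fun x : ℝ => ENNReal.ofReal (klForm μstar lamstar x l) :=
        hmk.comp (measurable_id.prodMk measurable_const)
      rw [gaussianReal_of_var_ne_zero _ hv, lintegral_withDensity_eq_lintegral_mul _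
        (measurable_gaussianPDF _ _) hmkl] at h1
      have hgn := gammaPDFReal_nonneg hα hβ l
      have hgd : gammaPDFReal αₙ βₙ l = c * (l ^ (αₙ - 1) * Real.exp (-(βₙ * l))) := by
        rw [gammaPDFReal, if_pos hl.le, hcdef]; ring
      show _ = ENNReal.ofReal (c * (l ^ (αₙ - 1) * Real.exp (-(βₙ * l)))
        * (klForm μstar lamstar μₙ l + 1 / (2 * κₙ)))
      rw [← hgd, ENNReal.ofReal_mul hgn, ← h1, ← lintegral_const_mul _
        ((measurable_gaussianPDF _ _).mul hmkl)]
      refine lintegral_congr fun x => ?_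
      simp only [normalGammaPDFReal, Pi.mul_apply, gaussianPDF]
      rw [mul_comm (gaussianPDFReal _ _ _), ENNReal.ofReal_mul hgn, mul_assoc]
    · rw [Set.indicator_of_notMem (show l ∉ Set.Ioi (0 : ℝ) from hl)]
      simp [ngPDF_of_nonpos μₙ κₙ αₙ βₙ _ (show ((_, l) : ℝ × ℝ).2 ≤ 0 from not_lt.1 hl)]
  have i0 := gamma_integrable αₙ βₙ hα hβ
  have i1 := gamma_integrable (αₙ + 1) βₙ (by linarith) hβ
  obtain ⟨i2, e2⟩ := gamma_log αₙ βₙ hα hβ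
  have e0 := Real.integral_rpow_mul_exp_neg_mul_Ioi hα hβ
  have e1 := Real.integral_rpow_mul_exp_neg_mul_Ioi (show 0 < αₙ + 1 by linarith) hβ
  obtain ⟨A, hA⟩ : ∃ A : ℝ, A = c * ((1 / 2) * (Real.log lamstar - 1) + 1 / (2 * κₙ)) :=
    ⟨_, rfl⟩
  obtain ⟨B, hB⟩ : ∃ B : ℝ, B = c * ((1 / 2) * (1 / lamstar + (μstar - μₙ) ^ 2)) := ⟨_, rfl⟩
  have hg : Set.EqOn g (fun l => A * (l ^ (αₙ - 1) * Real.exp (-(βₙ * l)))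
      + (B * (l ^ (αₙ + 1 - 1) * Real.exp (-(βₙ * l)))
      + (-(c / 2)) * (l ^ (αₙ - 1) * Real.exp (-(βₙ * l)) * Real.log l))) (Set.Ioi 0) := by
    intro l hl
    have hl : 0 < l := hl
    have hp : l ^ (αₙ + 1 - 1) = l ^ (αₙ - 1) * l := by
      rw [← Real.rpow_add_one hl.ne']; ring_nf
    simp only [g, hp, hA, hB, klForm, Real.log_div hlam.ne' hl.ne']
    ring
  have j12 : IntegrableOn (fun l : ℝ => B * (l ^ (αₙ + 1 - 1) * Real.exp (-(βₙ * l)))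
      + (-(c / 2)) * (l ^ (αₙ - 1) * Real.exp (-(βₙ * l)) * Real.log l)) (Set.Ioi 0) :=
    (i1.const_mul B).add (i2.const_mul (-(c / 2)))
  have hgi : IntegrableOn g (Set.Ioi 0) :=
    (integrableOn_congr_fun hg measurableSet_Ioi).2 ((i0.const_mul A).add j12)
  have hg0 : ∀ l ∈ Set.Ioi (0 : ℝ), 0 ≤ g l := by
    intro l hl
    have hl : 0 < l := hl
    have := klForm_nonneg μstar lamstar μₙ l hlam hl
    have hc' : 0 < c := by rw [hcdef]; positivity
    simp only [g]
    positivity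
  have hgint : ∫ l in Set.Ioi 0, g l = (1 / 2) * (Real.log (lamstar * βₙ) - digamma αₙ
          + (αₙ / βₙ) * (1 / lamstar + (μstar - μₙ) ^ 2) - 1 + 1 / κₙ) := by
    rw [setIntegral_congr_fun measurableSet_Ioi hg, integral_add (i0.const_mul A) j12,
      integral_add (i1.const_mul B) (i2.const_mul (-(c / 2))), integral_const_mul,
      integral_const_mul, integral_const_mul, e0, e1, e2, Real.Gamma_add_one hα.ne',
      Real.rpow_add_one (by positivity), Real.log_mul hlam.ne' hβ.ne']
    have hcc : c * ((1 / βₙ) ^ αₙ * Real.Gamma αₙ) = 1 := by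
      rw [hcdef, one_div, Real.inv_rpow hβ.le]
      have : βₙ ^ αₙ ≠ 0 := by positivity
      field_simp
    rw [hA, hB]
    generalize (1 / βₙ) ^ αₙ = q at hcc ⊢
    linear_combination (((1 / 2) * (Real.log lamstar - 1) + 1 / (2 * κₙ))
      + ((1 / 2) * (1 / lamstar + (μstar - μₙ) ^ 2)) * (αₙ / βₙ)
      - (1 / 2) * (digamma αₙ - Real.log βₙ)) * hcc
  have hmain : ∫⁻ pr, klDiv (gaussianReal μstar (Real.toNNReal (1 / lamstar)))
          (gaussianReal pr.1 (Real.toNNReal (1 / pr.2)))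
        ∂(normalGamma μₙ κₙ αₙ βₙ) = ENNReal.ofReal (∫ l in Set.Ioi 0, g l) := by
    rw [lintegral_congr_ae hae, normalGamma, lintegral_withDensity_eq_lintegral_mul _ hmd hmk,
      Measure.volume_eq_prod, lintegral_prod_symm' _ (hmd.mul hmk)]
    simp only [Pi.mul_apply]
    simp_rw [hinner]
    rw [lintegral_indicator measurableSet_Ioi, ofReal_integral_eq_lintegral_ofReal hgi]
    exact (ae_restrict_iff' measurableSet_Ioi).2 (ae_of_all _ hg0)
  rw [hmain, ← hgint, EReal.coe_ennreal_ofReal,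
    max_eq_left (setIntegral_nonneg measurableSet_Ioi hg0)]
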